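/- arXiv:2005.13777 — 5 statements merged into one kernel-verified Lean document; each statement's English description precedes it below -/
import Mathlib

section
/- For every equivalence relation E on ℕ, E is computably reducible to its computable FS-jump E⁺. -/
/-- The `e`-th partial computable function. -/
def phi (e : ℕ) : ℕ →. ℕ :=
  Nat.Partrec.Code.eval (Denumerable.ofNat Nat.Partrec.Code e)

/-- `W_e`, the `e`-th c.e. set: the domain of `φ_e`. -/
def WSet (e : ℕ) : Set ℕ := (phi e).Dom

/-- The `E`-equivalence class of `k`. -/
def classOf (E : ℕ → ℕ → Prop) (k : ℕ) : Set ℕ := {x | E k x}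

/-- Computable reducibility of binary relations on ℕ. -/
def Reduces (E F : ℕ → ℕ → Prop) : Prop :=
  ∃ f : ℕ → ℕ, Computable f ∧ ∀ m n, E m n ↔ F (f m) (f n)

/-- The computable FS-jump of `E`: `e E⁺ e'` iff the set of `E`-classes of elements
of `ran φ_e` equals the set of `E`-classes of elements of `ran φ_{e'}`. -/
def FSJump (E : ℕ → ℕ → Prop) : ℕ → ℕ → Prop :=
  fun e e' => classOf E '' (phi e).ran = classOf E '' (phi e').ran

theorem classOf_eq_classOf_iff {E : ℕ → ℕ → Prop} (hE : Equivalence E) {m n : ℕ} :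
    classOf E m = classOf E n ↔ E m n := by
  constructor
  · intro h
    have n_mem : n ∈ classOf E n := hE.refl n
    rwa [← h] at n_mem
  · intro h
    exact Set.ext fun _ => ⟨hE.trans (hE.symm h), hE.trans h⟩

theorem phi_encode (c : Nat.Partrec.Code) : phi (Encodable.encode c) = c.eval := by
  rw [phi, Denumerable.ofNat_encode]

/-- An index of the constant function with value `n`: as the range of `φ` at this index is `{n}`,
the map `constIndex` is the reduction of `E` to `E⁺`. -/
def constIndex (n : ℕ) : ℕ :=
  Encodable.encode (Nat.Partrec.Code.const n)

theorem primrec_constIndex : Primrec constIndex :=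
  Primrec.encode.comp Nat.Partrec.Code.primrec_const

theorem phi_constIndex_apply (n x : ℕ) : phi (constIndex n) x = Part.some n := by
  rw [constIndex, phi_encode, Nat.Partrec.Code.eval_const]

theorem ran_phi_constIndex (n : ℕ) : (phi (constIndex n)).ran = {n} := by
  ext y
  simp only [PFun.ran, phi_constIndex_apply, Part.mem_some_iff, exists_const,
    Set.mem_ofPred_eq, Set.mem_singleton_iff]

theorem fsJump_constIndex_iff (E : ℕ → ℕ → Prop) (m n : ℕ) :
    FSJump E (constIndex m) (constIndex n) ↔ classOf E m = classOf E n := by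
  simp only [FSJump, ran_phi_constIndex, Set.image_singleton, Set.singleton_eq_singleton_iff]

/-- For every equivalence relation `E` on ℕ, `E` is computably reducible to its
computable FS-jump `E⁺`. -/
theorem reduces_jump_self (E : ℕ → ℕ → Prop) (hE : Equivalence E) :
    Reduces E (FSJump E) := by
  refine ⟨constIndex, primrec_constIndex.to_comp, fun m n => ?_⟩
  calc
    E m n ↔ classOf E m = classOf E n := (classOf_eq_classOf_iff hE).symm
    _ ↔ FSJump E (constIndex m) (constIndex n) := (fsJump_constIndex_iff E m n).symm
end

section
/- For any equivalence relations E and F on ℕ, the computable FS-jump (E ⊕ F)⁺ of the disjoint sum is computably bireducible with the product E⁺ × F⁺ of the jumps. -/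
/-- The disjoint sum `E ⊕ F`, with `ℕ × {0,1}` identified with ℕ via
`(m,0) ↦ 2*m` and `(m,1) ↦ 2*m+1`. -/
def dsum (E F : ℕ → ℕ → Prop) : ℕ → ℕ → Prop :=
  fun a b => (a % 2 = 0 ∧ b % 2 = 0 ∧ E (a / 2) (b / 2)) ∨
    (a % 2 = 1 ∧ b % 2 = 1 ∧ F (a / 2) (b / 2))

/-- The product `E × F`, with `ℕ × ℕ` identified with ℕ via the pairing bijection. -/
def prodRel (E F : ℕ → ℕ → Prop) : ℕ → ℕ → Prop :=
  fun a b => E (Nat.unpair a).1 (Nat.unpair b).1 ∧ F (Nat.unpair a).2 (Nat.unpair b).2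

/-!
A set `A ⊆ ℕ` meets the classes of `E ⊕ F` exactly as its halves `{m | 2 * m ∈ A}` and
`{m | 2 * m + 1 ∈ A}` meet those of `E` and of `F`. Nothing is confused between the two sides
because the classes are nonempty, so a class of `E ⊕ F` remembers the parity it came from. Both
passing from a c.e. set to its two halves and joining two c.e. sets into one are effective on
indices, by the s-m-n theorem, and these are the two reductions.
-/

section Indices

theorem partrec₂_phi : Partrec₂ phi :=
  Nat.Partrec.Code.eval_part.comp₂
    ((Computable.ofNat Nat.Partrec.Code).comp Computable.fst) Computable.snd

theorem exists_computable_phi_eq {α : Type*} [Primcodable α] {g : α → ℕ →. ℕ}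
    (hg : Partrec₂ g) : ∃ f : α → ℕ, Computable f ∧ ∀ a, phi (f a) = g a := by
  obtain ⟨c, hc⟩ := Nat.Partrec.Code.exists_code.1 hg
  refine ⟨fun a => Encodable.encode (c.curry (Encodable.encode a)), ?_, fun a => ?_⟩
  · exact Computable.encode.comp
      (Nat.Partrec.Code.primrec₂_curry.to_comp.comp (Computable.const c) Computable.encode)
  · funext x
    have hdecode : Encodable.decode (α := α × ℕ) (Nat.pair (Encodable.encode a) x) =
        some (a, x) := by
      simp
    simp only [phi, Denumerable.ofNat_encode, Nat.Partrec.Code.eval_curry, hc, hdecode,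
      Part.coe_some, Part.bind_some]
    exact Part.map_id' (fun _ => rfl) _

theorem exists_computable_ran_phi_eq_image {g : ℕ → ℕ} (hg : Computable g) :
    ∃ f : ℕ → ℕ, Computable f ∧ ∀ e, (phi (f e)).ran = g '' (phi e).ran := by
  have himage : Partrec₂ fun e x => (phi e x).map g :=
    partrec₂_phi.map (hg.comp Computable.snd)
  obtain ⟨f, hf, hphi⟩ := exists_computable_phi_eq himage
  refine ⟨f, hf, fun e => ?_⟩
  ext y
  simp only [hphi, PFun.ran, Set.mem_ofPred_eq, Part.mem_map_iff, Set.mem_image]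
  exact ⟨fun ⟨x, m, hm, hy⟩ => ⟨m, ⟨x, hm⟩, hy⟩, fun ⟨m, ⟨x, hm⟩, hy⟩ => ⟨x, m, hm, hy⟩⟩

theorem exists_computable_ran_phi_eq_preimage {g : ℕ → ℕ} (hg : Computable g) :
    ∃ f : ℕ → ℕ, Computable f ∧ ∀ e, (phi (f e)).ran = g ⁻¹' (phi e).ran := by
  -- On input `⟨m, x⟩`, output `m` once `φ_e(x)` has converged to `g m`.
  have hpreimage : Partrec₂ fun e (p : ℕ) => (phi e p.unpair.2).bind fun y =>
      ((bif y == g p.unpair.1 then some p.unpair.1 else none : Option ℕ) : Part ℕ) := by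
    have hunpair : Computable fun q : ℕ × ℕ => q.2.unpair :=
      Computable.unpair.comp Computable.snd
    have hm : Computable fun r : (ℕ × ℕ) × ℕ => r.1.2.unpair.1 :=
      Computable.fst.comp (hunpair.comp Computable.fst)
    refine Partrec.bind (partrec₂_phi.comp Computable.fst (Computable.snd.comp hunpair)) ?_
    exact Computable.ofOption (Computable.cond
      (Primrec.beq.to_comp.comp Computable.snd (hg.comp hm))
      (Computable.option_some.comp hm) (Computable.const none))
  obtain ⟨f, hf, hphi⟩ := exists_computable_phi_eq hpreimage
  refine ⟨f, hf, fun e => ?_⟩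
  ext m
  simp only [hphi, PFun.ran, Set.mem_ofPred_eq, Set.mem_preimage, Part.mem_bind_iff,
    Part.mem_ofOption, Bool.cond_eq_ite, beq_iff_eq, Option.mem_def,
    Option.ite_none_right_eq_some, Option.some.injEq]
  constructor
  · rintro ⟨p, y, hy, rfl, rfl⟩
    exact ⟨p.unpair.2, hy⟩
  · rintro ⟨x, hx⟩
    exact ⟨Nat.pair m x, g m, by simpa using hx, by simp⟩

theorem exists_computable_ran_phi_eq_union :
    ∃ f : ℕ × ℕ → ℕ, Computable f ∧
      ∀ d e, (phi (f (d, e))).ran = (phi d).ran ∪ (phi e).ran := by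
  have hunion : Partrec₂ fun (a : ℕ × ℕ) (x : ℕ) =>
      phi (bif x.bodd then a.2 else a.1) x.div2 :=
    partrec₂_phi.comp
      (Computable.cond (Computable.nat_bodd.comp Computable.snd)
        (Computable.snd.comp Computable.fst) (Computable.fst.comp Computable.fst))
      (Computable.nat_div2.comp Computable.snd)
  obtain ⟨f, hf, hphi⟩ := exists_computable_phi_eq hunion
  refine ⟨f, hf, fun d e => ?_⟩
  ext y
  simp only [hphi, PFun.ran, Set.mem_ofPred_eq, Set.mem_union]
  constructor
  · rintro ⟨x, hx⟩
    cases hparity : x.bodd <;> rw [hparity] at hx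
    · exact Or.inl ⟨x.div2, hx⟩
    · exact Or.inr ⟨x.div2, hx⟩
  · rintro (⟨x, hx⟩ | ⟨x, hx⟩)
    · exact ⟨2 * x, by simpa [Nat.div2_bit0] using hx⟩
    · exact ⟨2 * x + 1, by simpa [Nat.div2_bit1] using hx⟩

end Indices

section Parity

theorem injective_two_mul_add_one : Function.Injective fun m : ℕ => 2 * m + 1 :=
  (add_left_injective 1).comp (mul_right_injective₀ two_ne_zero)

theorem disjoint_image_two_mul_image_two_mul_add_one (S T : Set ℕ) :
    Disjoint ((2 * ·) '' S) ((2 * · + 1) '' T) := by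
  rw [Set.disjoint_left]
  rintro _ ⟨s, -, rfl⟩ ⟨t, -, heq⟩
  exact Nat.two_mul_ne_two_mul_add_one heq.symm

theorem image_two_mul_preimage_union_image_two_mul_add_one_preimage (A : Set ℕ) :
    (2 * ·) '' ((2 * ·) ⁻¹' A) ∪ (2 * · + 1) '' ((2 * · + 1) ⁻¹' A) = A := by
  have hcover : Set.range (2 * · : ℕ → ℕ) ∪ Set.range (2 * · + 1 : ℕ → ℕ) = Set.univ := by
    ext n
    simp [Nat.even_or_odd n]
  rw [Set.image_preimage_eq_inter_range, Set.image_preimage_eq_inter_range,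
    ← Set.inter_union_distrib_left, hcover, Set.inter_univ]

theorem preimage_two_mul_join (A B : Set ℕ) :
    (2 * ·) ⁻¹' ((2 * ·) '' A ∪ (2 * · + 1) '' B) = A := by
  ext m
  simp [Nat.two_mul_ne_two_mul_add_one.symm]

theorem preimage_two_mul_add_one_join (A B : Set ℕ) :
    (2 * · + 1) ⁻¹' ((2 * ·) '' A ∪ (2 * · + 1) '' B) = B := by
  ext m
  simp [Nat.two_mul_ne_two_mul_add_one]

end Parity

section DisjointSum

variable {E F : ℕ → ℕ → Prop}

theorem classOf_dsum_two_mul (E F : ℕ → ℕ → Prop) (m : ℕ) :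
    classOf (dsum E F) (2 * m) = (2 * ·) '' classOf E m := by
  ext x
  rcases Nat.even_or_odd' x with ⟨n, rfl | rfl⟩
  · simp [classOf, dsum]
  · simp [classOf, dsum, Nat.two_mul_ne_two_mul_add_one]

theorem classOf_dsum_two_mul_add_one (E F : ℕ → ℕ → Prop) (m : ℕ) :
    classOf (dsum E F) (2 * m + 1) = (2 * · + 1) '' classOf F m := by
  ext x
  rcases Nat.even_or_odd' x with ⟨n, rfl | rfl⟩
  · simp [classOf, dsum, Nat.two_mul_ne_two_mul_add_one.symm]
  · simp [classOf, dsum, Nat.mul_add_div]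

theorem image_classOf_dsum (E F : ℕ → ℕ → Prop) (A : Set ℕ) :
    classOf (dsum E F) '' A =
      Set.image (2 * ·) '' (classOf E '' ((2 * ·) ⁻¹' A)) ∪
        Set.image (2 * · + 1) '' (classOf F '' ((2 * · + 1) ⁻¹' A)) := by
  conv_lhs => rw [← image_two_mul_preimage_union_image_two_mul_add_one_preimage A]
  simp only [Set.image_union, Set.image_image, classOf_dsum_two_mul,
    classOf_dsum_two_mul_add_one]

theorem preimage_image_two_mul_image_classOf_dsum (hF : ∀ m, (classOf F m).Nonempty)
    (A : Set ℕ) :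
    Set.image (2 * ·) ⁻¹' (classOf (dsum E F) '' A) = classOf E '' ((2 * ·) ⁻¹' A) := by
  have hodd : Set.image (2 * ·) ⁻¹' (Set.image (2 * · + 1) ''
      (classOf F '' ((2 * · + 1) ⁻¹' A))) = ∅ := by
    rw [Set.eq_empty_iff_forall_notMem]
    rintro S ⟨-, ⟨m, -, rfl⟩, heq⟩
    exact ((hF m).image _).ne_empty
      ((disjoint_image_two_mul_image_two_mul_add_one S _).eq_bot_of_ge heq.le)
  rw [image_classOf_dsum, Set.preimage_union, hodd, Set.union_empty,
    Set.preimage_image_eq _ (mul_right_injective₀ two_ne_zero).image_injective]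

theorem preimage_image_two_mul_add_one_image_classOf_dsum
    (hE : ∀ m, (classOf E m).Nonempty) (A : Set ℕ) :
    Set.image (2 * · + 1) ⁻¹' (classOf (dsum E F) '' A) =
      classOf F '' ((2 * · + 1) ⁻¹' A) := by
  have heven : Set.image (2 * · + 1) ⁻¹' (Set.image (2 * ·) ''
      (classOf E '' ((2 * ·) ⁻¹' A))) = ∅ := by
    rw [Set.eq_empty_iff_forall_notMem]
    rintro S ⟨-, ⟨m, -, rfl⟩, heq⟩
    exact ((hE m).image _).ne_empty
      ((disjoint_image_two_mul_image_two_mul_add_one _ S).eq_bot_of_le heq.le)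
  rw [image_classOf_dsum, Set.preimage_union, heven, Set.empty_union,
    Set.preimage_image_eq _ injective_two_mul_add_one.image_injective]

theorem image_classOf_dsum_eq_iff (hE : ∀ m, (classOf E m).Nonempty)
    (hF : ∀ m, (classOf F m).Nonempty) (A B : Set ℕ) :
    classOf (dsum E F) '' A = classOf (dsum E F) '' B ↔
      classOf E '' ((2 * ·) ⁻¹' A) = classOf E '' ((2 * ·) ⁻¹' B) ∧
        classOf F '' ((2 * · + 1) ⁻¹' A) = classOf F '' ((2 * · + 1) ⁻¹' B) := by
  constructor
  · intro h
    rw [← preimage_image_two_mul_image_classOf_dsum hF,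
      ← preimage_image_two_mul_image_classOf_dsum hF,
      ← preimage_image_two_mul_add_one_image_classOf_dsum hE,
      ← preimage_image_two_mul_add_one_image_classOf_dsum hE, h]
    exact ⟨rfl, rfl⟩
  · rintro ⟨heven, hodd⟩
    rw [image_classOf_dsum, image_classOf_dsum, heven, hodd]

theorem jump_dsum_reduces_prod_jump (hE : ∀ m, (classOf E m).Nonempty)
    (hF : ∀ m, (classOf F m).Nonempty) :
    Reduces (FSJump (dsum E F)) (prodRel (FSJump E) (FSJump F)) := by
  obtain ⟨f, hf, hran_f⟩ := exists_computable_ran_phi_eq_preimage Primrec.nat_double.to_comp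
  obtain ⟨g, hg, hran_g⟩ := exists_computable_ran_phi_eq_preimage Primrec.nat_double_succ.to_comp
  refine ⟨fun e => Nat.pair (f e) (g e), Primrec₂.natPair.to_comp.comp hf hg, fun d e => ?_⟩
  simp only [prodRel, FSJump, Nat.unpair_pair, hran_f, hran_g]
  exact image_classOf_dsum_eq_iff hE hF _ _

theorem prod_jump_reduces_jump_dsum (hE : ∀ m, (classOf E m).Nonempty)
    (hF : ∀ m, (classOf F m).Nonempty) :
    Reduces (prodRel (FSJump E) (FSJump F)) (FSJump (dsum E F)) := by
  obtain ⟨f, hf, hran_f⟩ := exists_computable_ran_phi_eq_image Primrec.nat_double.to_comp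
  obtain ⟨g, hg, hran_g⟩ := exists_computable_ran_phi_eq_image Primrec.nat_double_succ.to_comp
  obtain ⟨u, hu, hran_u⟩ := exists_computable_ran_phi_eq_union
  refine ⟨fun a => u (f a.unpair.1, g a.unpair.2), ?_, fun a b => ?_⟩
  · exact hu.comp ((hf.comp (Computable.fst.comp Computable.unpair)).pair
      (hg.comp (Computable.snd.comp Computable.unpair)))
  · simp only [prodRel, FSJump, image_classOf_dsum_eq_iff hE hF, hran_u, hran_f, hran_g,
      preimage_two_mul_join, preimage_two_mul_add_one_join]

theorem jump_dsum_bireducible_prod_jump_general (hE : ∀ m, (classOf E m).Nonempty)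
    (hF : ∀ m, (classOf F m).Nonempty) :
    Reduces (FSJump (dsum E F)) (prodRel (FSJump E) (FSJump F)) ∧
      Reduces (prodRel (FSJump E) (FSJump F)) (FSJump (dsum E F)) :=
  ⟨jump_dsum_reduces_prod_jump hE hF, prod_jump_reduces_jump_dsum hE hF⟩

end DisjointSum

/-- `(E ⊕ F)⁺` is computably bireducible with `E⁺ × F⁺`. -/
theorem jump_dsum_bireducible_prod_jump (E F : ℕ → ℕ → Prop)
    (hE : Equivalence E) (hF : Equivalence F) :
    Reduces (FSJump (dsum E F)) (prodRel (FSJump E) (FSJump F)) ∧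
      Reduces (prodRel (FSJump E) (FSJump F)) (FSJump (dsum E F)) :=
  jump_dsum_bireducible_prod_jump_general (fun m => ⟨m, hE.refl m⟩) fun m => ⟨m, hF.refl m⟩
end

section
/- If E is a ceer with infinitely many equivalence classes, then id < E⁺: the identity relation on ℕ is computably reducible to E⁺, but E⁺ is not computably reducible to the identity relation. -/
/-- A ceer: an equivalence relation on ℕ which is c.e. as a set of pairs. -/
def Ceer (E : ℕ → ℕ → Prop) : Prop :=
  Equivalence E ∧ ∃ e : ℕ, ∀ m n : ℕ, E m n ↔ Nat.pair m n ∈ WSet e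

/-!
Call `k` a least representative if it is the least element of its `E`-class. This is a co-c.e.
property, so it is c.e. in `(n, k)` that at most `n` of the numbers `i ≤ k` are least
representatives, although their exact number need not be computable. For fixed `n`, these `k` form
an initial segment of `ℕ` meeting exactly `n` classes, and sending `n` to an index for this segment
reduces `id` to `E⁺`.

Relations reducible to `id` are decidable, but `E⁺` is not: one of its classes consists of the
indices of functions with empty range, which is undecidable by Rice's theorem.
-/

section RecursivelyEnumerable

open Nat.Partrec (Code)
open Filter

variable {α : Type*} [Primcodable α]

theorem rePred_exists_of_primrecRel {R : α → ℕ → Prop} (hR : PrimrecRel R) :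
    REPred fun a => ∃ s, R a s := by
  classical
  have search : Partrec fun a => Nat.rfind fun s => Part.some (decide (R a s)) :=
    Partrec.rfind hR.decide.to_comp.partrec
  exact search.dom_re.of_eq fun a => Nat.rfind_dom.trans (by simp)

theorem exists_primrecRel_monotone_of_rePred {p : α → Prop} (hp : REPred p) :
    ∃ R : α → ℕ → Prop, PrimrecRel R ∧ (∀ a, Monotone (R a)) ∧ ∀ a, p a ↔ ∃ s, R a s := by
  obtain ⟨c, hc⟩ := Code.exists_code.1 hp
  refine ⟨fun a s => (Code.evaln s c (Encodable.encode a)).isSome, ?_, fun a s t hst => ?_,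
    fun a => ?_⟩
  · have evaln_primrec : Primrec fun t : α × ℕ => Code.evaln t.2 c (Encodable.encode t.1) :=
      Code.primrec_evaln.comp <|
        (Primrec.snd.pair (Primrec.const c)).pair (Primrec.encode.comp Primrec.fst)
    exact Primrec.eq.comp (Primrec.option_isSome.comp evaln_primrec) (Primrec.const true)
  · simp only [Option.isSome_iff_exists]
    exact fun ⟨y, hy⟩ => ⟨y, Code.evaln_mono hst hy⟩
  · have halts : p a ↔ (c.eval (Encodable.encode a)).Dom := by
      simp [hc, Part.dom_iff_mem]
    simp only [halts, Part.dom_iff_mem, Code.evaln_complete, Option.isSome_iff_exists]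
    exact exists_comm

theorem rePred_exists_lt {p : ℕ × α → Prop} (hp : REPred p) :
    REPred fun q : ℕ × α => ∃ i < q.1, p (i, q.2) := by
  obtain ⟨R, hR, -, hpR⟩ := exists_primrecRel_monotone_of_rePred hp
  have swapped : PrimrecRel fun (i : ℕ) (t : α × ℕ) => R (i, t.1) t.2 :=
    hR.comp (Primrec.fst.pair (Primrec.fst.comp Primrec.snd)) (Primrec.snd.comp Primrec.snd)
  have bounded : PrimrecRel fun (q : ℕ × α) (s : ℕ) => ∃ i ∈ List.range q.1, R (i, q.2) s :=
    swapped.exists_mem_list.comp (Primrec.list_range.comp (Primrec.fst.comp Primrec.fst))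
      ((Primrec.snd.comp Primrec.fst).pair Primrec.snd)
  refine (rePred_exists_of_primrecRel bounded).of_eq fun q => ?_
  simp only [hpR, List.mem_range]
  grind

theorem primrec₂_count {R : ℕ → α → Prop} [DecidableRel R] (hR : PrimrecRel R) :
    Primrec₂ fun (k : ℕ) (a : α) => Nat.count (R · a) k :=
  (Primrec.list_length.comp (hR.listFilter.comp (Primrec.list_range.comp Primrec.fst)
    Primrec.snd)).of_eq fun _ => by
      simp [Nat.count, List.countP_eq_length_filter]

/-- Counting each `i` until `¬p i` is confirmed gives, stage by stage, upper bounds that eventually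
reach the true count. -/
theorem rePred_count_le {p : ℕ → Prop} [DecidablePred p] (hp : REPred fun i => ¬p i) :
    REPred fun q : ℕ × ℕ => Nat.count p q.2 ≤ q.1 := by
  classical
  obtain ⟨R, hR, hmono, hpR⟩ := exists_primrecRel_monotone_of_rePred hp
  have countR : PrimrecRel fun (q : ℕ × ℕ) (s : ℕ) => Nat.count (fun i => ¬R i s) q.2 ≤ q.1 :=
    Primrec.nat_le.comp
      ((primrec₂_count hR.not).comp (Primrec.snd.comp Primrec.fst) Primrec.snd)
      (Primrec.fst.comp Primrec.fst)
  refine (rePred_exists_of_primrecRel countR).of_eq fun ⟨n, k⟩ => ⟨?_, fun hle => ?_⟩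
  · rintro ⟨s, hs⟩
    have unrefuted (i : ℕ) (hi : p i) : ¬R i s := fun hRi => (hpR i).2 ⟨s, hRi⟩ hi
    exact (Nat.count_mono_left fun i _ => unrefuted i).trans hs
  · have settled (i : ℕ) : ∀ᶠ s in atTop, ¬p i → R i s := by
      by_cases hi : p i
      · exact .of_forall fun _ h => absurd hi h
      · obtain ⟨s, hs⟩ := (hpR i).1 hi
        exact (eventually_ge_atTop s).mono fun t hst _ => hmono i hst hs
    obtain ⟨s, hs⟩ := ((eventually_all_finset (Finset.range k)).2 fun i _ => settled i).exists
    exact ⟨s, (Nat.count_mono_left fun i hi => not_imp_comm.1 (hs i (Finset.mem_range.2 hi))).trans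
      hle⟩

/-- The s-m-n theorem applied to the partial function `(a, k) ↦ k` with domain `p`. -/
theorem exists_computable_ran_phi_eq {p : α × ℕ → Prop} (hp : REPred p) :
    ∃ f : α → ℕ, Computable f ∧ ∀ a, (phi (f a)).ran = {k | p (a, k)} := by
  have restrictedSnd : Partrec fun q : α × ℕ => (Part.assert (p q) fun _ => Part.some ()).map
      fun _ => q.2 := hp.map (Computable.snd.comp Computable.fst).to₂
  obtain ⟨c, hc⟩ := Code.exists_code.1 restrictedSnd
  refine ⟨fun a => Encodable.encode (c.curry (Encodable.encode a)), ?_, fun a => ?_⟩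
  · exact (Primrec.encode.comp (Code.primrec₂_curry.comp (Primrec.const c) Primrec.encode)).to_comp
  · ext k
    simp [phi, PFun.ran, Code.eval_curry, hc]

end RecursivelyEnumerable

section LeastRepresentatives

variable {E : ℕ → ℕ → Prop}

/-- `k` is the least element of its `E`-class (for `E` an equivalence relation). Such numbers are
used as canonical representatives when counting classes. -/
def IsLeastRep (E : ℕ → ℕ → Prop) (k : ℕ) : Prop := ∀ j < k, ¬E j k

open Classical in
/-- The numbers `k` such that `{0, …, k}` meets at most `n` classes of `E`; the classes are counted
by their least representatives. -/
def segmentOfClasses (E : ℕ → ℕ → Prop) (n : ℕ) : Set ℕ :=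
  {k | Nat.count (IsLeastRep E) (k + 1) ≤ n}

theorem classOf_eq_classOf_of_rel (hE : Equivalence E) {a b : ℕ} (hab : E a b) :
    classOf E a = classOf E b :=
  Set.ext fun _ => ⟨hE.trans (hE.symm hab), hE.trans hab⟩

theorem exists_isLeastRep_rel (hE : Equivalence E) (k : ℕ) : ∃ r, IsLeastRep E r ∧ E r k := by
  classical
  have hex : ∃ r, E r k := ⟨k, hE.refl k⟩
  exact ⟨Nat.find hex, fun j hj hjr => Nat.find_min hex hj (hE.trans hjr (Nat.find_spec hex)),
    Nat.find_spec hex⟩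

theorem infinite_setOf_isLeastRep (hE : Equivalence E) (hinf : (Set.range (classOf E)).Infinite) :
    {k | IsLeastRep E k}.Infinite := by
  have range_subset : Set.range (classOf E) ⊆ classOf E '' {k | IsLeastRep E k} := by
    rintro _ ⟨k, rfl⟩
    obtain ⟨r, hr, hrk⟩ := exists_isLeastRep_rel hE k
    exact ⟨r, hr, classOf_eq_classOf_of_rel hE hrk⟩
  exact (hinf.mono range_subset).of_image _

theorem rePred_not_isLeastRep (hE : REPred fun q : ℕ × ℕ => E q.1 q.2) :
    REPred fun k => ¬IsLeastRep E k := by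
  have below : REPred fun k : ℕ => ∃ j < k, E j k :=
    (rePred_exists_lt hE).comp (Computable.id.pair Computable.id)
  exact below.of_eq fun k => by simp [IsLeastRep]

theorem rePred_mem_segmentOfClasses (hE : REPred fun q : ℕ × ℕ => E q.1 q.2) :
    REPred fun q : ℕ × ℕ => q.2 ∈ segmentOfClasses E q.1 := by
  classical
  have shifted : Computable fun q : ℕ × ℕ => (q.1, q.2 + 1) :=
    Computable.fst.pair (Computable.succ.comp Computable.snd)
  exact (rePred_count_le (rePred_not_isLeastRep hE)).comp shifted

theorem strictMono_image_classOf_segmentOfClasses (hE : Equivalence E)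
    (hinf : (Set.range (classOf E)).Infinite) :
    StrictMono fun n => classOf E '' segmentOfClasses E n := by
  classical
  refine strictMono_nat_of_lt_succ fun n => ?_
  have hsub : segmentOfClasses E n ⊆ segmentOfClasses E (n + 1) := fun _ hk => Nat.le_succ_of_le hk
  have hleast := infinite_setOf_isLeastRep hE hinf
  set r := Nat.nth (IsLeastRep E) n
  have hr : IsLeastRep E r := Nat.nth_mem_of_infinite hleast n
  have hcount : Nat.count (IsLeastRep E) (r + 1) = n + 1 :=
    Nat.count_nth_succ_of_infinite hleast n
  refine Set.ssubset_iff_of_subset (Set.image_mono hsub) |>.2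
    ⟨classOf E r, ⟨r, hcount.le, rfl⟩, ?_⟩
  rintro ⟨j, hj, hjr⟩
  have hEjr : r ∈ classOf E j := hjr.symm ▸ hE.refl r
  have hrj : r ≤ j := not_lt.1 fun hlt => hr j hlt hEjr
  have : n + 1 ≤ n := calc
    n + 1 = Nat.count (IsLeastRep E) (r + 1) := hcount.symm
    _ ≤ Nat.count (IsLeastRep E) (j + 1) := Nat.count_monotone _ (Nat.succ_le_succ hrj)
    _ ≤ n := hj
  exact absurd this (Nat.not_succ_le_self n)

end LeastRepresentatives

theorem rePred_of_ceer {E : ℕ → ℕ → Prop} (hE : Ceer E) :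
    REPred fun q : ℕ × ℕ => E q.1 q.2 := by
  obtain ⟨-, e, he⟩ := hE
  have hphi : Partrec (phi e) :=
    Nat.Partrec.Code.eval_part.comp (Computable.const _) Computable.id
  exact (hphi.comp Primrec₂.natPair.to_comp).dom_re.of_eq fun q => (he q.1 q.2).symm

theorem reduces_eq_fsJump {E : ℕ → ℕ → Prop} (hE : Ceer E)
    (hinf : (Set.range (classOf E)).Infinite) : Reduces (@Eq ℕ) (FSJump E) := by
  obtain ⟨f, hf, hran⟩ :=
    exists_computable_ran_phi_eq (rePred_mem_segmentOfClasses (rePred_of_ceer hE))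
  refine ⟨f, hf, fun m n => ?_⟩
  rw [FSJump, hran, hran]
  exact (strictMono_image_classOf_segmentOfClasses hE.1 hinf).injective.eq_iff.symm

theorem computablePred_of_reduces {E F : ℕ → ℕ → Prop} (h : Reduces E F)
    (hF : ComputablePred fun q : ℕ × ℕ => F q.1 q.2) :
    ComputablePred fun q : ℕ × ℕ => E q.1 q.2 := by
  obtain ⟨f, hf, hEF⟩ := h
  exact ComputablePred.computable_of_manyOneReducible
    ⟨fun q => (f q.1, f q.2), (hf.comp Computable.fst).pair (hf.comp Computable.snd),
      fun q => hEF q.1 q.2⟩ hF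

theorem not_computablePred_ran_phi_eq_empty : ¬ComputablePred fun e => (phi e).ran = ∅ := by
  intro h
  have onCodes : ComputablePred fun c : Nat.Partrec.Code => c.eval ∈ {f : ℕ →. ℕ | f.ran = ∅} :=
    ComputablePred.computable_of_manyOneReducible
      ⟨Encodable.encode, Computable.encode, fun c => by simp [phi]⟩ h
  have ran_id : PFun.ran (fun n : ℕ => Part.some n) = ∅ :=
    ComputablePred.rice _ onCodes Nat.Partrec.none Nat.Partrec.some 
      (Set.eq_empty_of_forall_notMem fun k ⟨_, hk⟩ => Part.notMem_none k hk)
  exact Set.eq_empty_iff_forall_notMem.1 ran_id 0 ⟨0, Part.mem_some 0⟩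

theorem not_computablePred_fsJump (E : ℕ → ℕ → Prop) :
    ¬ComputablePred fun q : ℕ × ℕ => FSJump E q.1 q.2 := by
  intro h
  obtain ⟨c, hc⟩ := Nat.Partrec.Code.exists_code.1 Nat.Partrec.none
  have ran_empty : (phi (Encodable.encode c)).ran = ∅ := by simp [phi, hc, PFun.ran]
  exact not_computablePred_ran_phi_eq_empty <| ComputablePred.computable_of_manyOneReducible
    ⟨fun e => (e, Encodable.encode c), Computable.id.pair (Computable.const _),
      fun e => by simp [FSJump, ran_empty]⟩ h

theorem not_reduces_fsJump_eq (E : ℕ → ℕ → Prop) : ¬Reduces (FSJump E) (@Eq ℕ) := fun h =>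
  not_computablePred_fsJump E (computablePred_of_reduces h Primrec.eq.computablePred)

/-- If `E` is a ceer with infinitely many classes, then `id < E⁺`. -/
theorem id_lt_jump_of_ceer (E : ℕ → ℕ → Prop) (hE : Ceer E)
    (hinf : (Set.range (classOf E)).Infinite) :
    Reduces (@Eq ℕ) (FSJump E) ∧ ¬ Reduces (FSJump E) (@Eq ℕ) :=
  ⟨reduces_eq_fsJump hE hinf, not_reduces_fsJump_eq E⟩
end

section
/- There exists a set A ⊆ ℕ with infinite complement such that A is Σ⁰₄ (i.e., there is a computable predicate R ⊆ ℕ⁵ with n ∈ A ⟺ ∃p ∀q ∃m ∀s R(p,q,m,s,n)) and the identity relation on ℕ is not computably reducible to (E_A)⁺. -/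
/-- `E_A`: `m E_A n` iff `m = n` or both `m, n ∈ A`. -/
def EA (A : Set ℕ) : ℕ → ℕ → Prop :=
  fun m n => m = n ∨ (m ∈ A ∧ n ∈ A)

/-!
The complement `C` of `A` is built to be cohesive for the family of all sets `ran φ_{φ_e(i)}`: the
`e`-th element of `C` and all later ones lie in exactly the same members of the family with index
below a bound depending on `e`. If `φ_e` were a reduction of `id` to `(E_A)⁺`, then for each
`i ≤ 2 ^ (e + 2)` the class of `φ_e(i)` would be determined by which of the first `e + 1` elements
of `C` lie in `ran φ_{φ_e(i)}` and by whether this range meets `A`. This leaves only `2 ^ (e + 2)`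
possibilities, and the pigeonhole principle gives a contradiction.

To get `C`, record membership of `y` in the first `k` sets as a binary word, the `k`-state of `y`,
and choose greedily elements whose state is the lexicographically least one occurring infinitely
often. The lexicographic order makes these limiting states cohere as `k` grows. States are limits
of computable approximations, so being the limiting state is a conjunction of a `Σ⁰₃` and a `Π⁰₃`
condition; once that state and a stage at which the states of `0, …, n` have settled are guessed,
`n ∉ C` is decided by running the greedy choice up to `n`.
-/

open Filter
open Nat.Partrec (Code)

namespace CohesiveJump

/-! ### `Σ⁰₄` sets -/

/-- `A` is `Σ⁰₄`: membership is an `∃∀∃∀` condition over a computable matrix. -/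
def IsSigma04 (A : Set ℕ) : Prop :=
  ∃ R : ℕ × ℕ × ℕ × ℕ × ℕ → Bool, Computable R ∧
    ∀ n, n ∈ A ↔ ∃ p, ∀ q, ∃ m, ∀ s, R (p, q, m, s, n) = true

theorem isSigma04_of_exists_forall_exists_eventually {α : Type*} [Denumerable α]
    {Q : α → ℕ → ℕ → ℕ → ℕ → Prop}
    (hQ : PrimrecPred fun x : α × ℕ × ℕ × ℕ × ℕ => Q x.1 x.2.1 x.2.2.1 x.2.2.2.1 x.2.2.2.2)
    {A : Set ℕ} (hA : ∀ n, n ∈ A ↔ ∃ p, ∀ q, ∃ y, ∀ᶠ s in atTop, Q p q y s n) :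
    IsSigma04 A := by
  have hp : Primrec fun x : ℕ × ℕ × ℕ × ℕ × ℕ => Denumerable.ofNat α x.1 :=
    (Primrec.ofNat α).comp .fst
  have hq : Primrec fun x : ℕ × ℕ × ℕ × ℕ × ℕ => x.2.1 := .comp .fst .snd
  have hm : Primrec fun x : ℕ × ℕ × ℕ × ℕ × ℕ => x.2.2.1.unpair :=
    .comp .unpair (.comp .fst (.comp .snd .snd))
  have hs : Primrec fun x : ℕ × ℕ × ℕ × ℕ × ℕ => x.2.2.2.1 :=
    .comp .fst (.comp .snd (.comp .snd .snd))
  have hn : Primrec fun x : ℕ × ℕ × ℕ × ℕ × ℕ => x.2.2.2.2 :=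
    .comp .snd (.comp .snd (.comp .snd .snd))
  obtain ⟨_, hR⟩ := (Primrec.nat_le.comp (Primrec.snd.comp hm) hs).not.or
    (hQ.comp (hp.pair (hq.pair ((Primrec.fst.comp hm).pair (hs.pair hn)))))
  refine ⟨_, hR.to_comp, fun n => ?_⟩
  simp only [hA, decide_eq_true_eq, ← imp_iff_not_or, eventually_atTop]
  have hsurj : Function.Surjective (Denumerable.ofNat α) := (Denumerable.eqv α).symm.surjective
  rw [hsurj.exists]
  refine exists_congr fun p => forall_congr' fun q => ⟨?_, ?_⟩
  · rintro ⟨y, t, h⟩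
    exact ⟨Nat.pair y t, by simpa only [Nat.unpair_pair] using h⟩
  · rintro ⟨m, h⟩
    exact ⟨m.unpair.1, m.unpair.2, h⟩

/-! ### Lower limits of sequences of natural numbers -/

theorem liminf_eq_iff_of_frequently_le {ι : Type*} {f : Filter ι} {u : ι → ℕ} {B σ : ℕ}
    (hB : ∃ᶠ i in f, u i ≤ B) :
    liminf u f = σ ↔ (∀ᶠ i in f, σ ≤ u i) ∧ ∃ᶠ i in f, u i = σ := by
  have hbdd : IsCoboundedUnder (· ≥ ·) f u := .of_frequently_le hB
  have heventually : ∀ᶠ i in f, liminf u f ≤ u i := by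
    have hmem : sSup {a | ∀ᶠ i in f, a ≤ u i} ∈ {a | ∀ᶠ i in f, a ≤ u i} := by
      refine Nat.sSup_mem ⟨0, by simp⟩ ⟨B, fun a ha => ?_⟩
      obtain ⟨i, hi, hai⟩ := (hB.and_eventually ha).exists
      exact hai.trans hi
    rwa [← liminf_eq] at hmem
  constructor
  · rintro rfl
    refine ⟨heventually, fun hne => ?_⟩
    have hsucc : ∀ᶠ i in f, liminf u f + 1 ≤ u i := by
      filter_upwards [heventually, hne] with i hle hne
      omega
    have := le_liminf_of_le hbdd hsucc
    omega
  · rintro ⟨hle, heq⟩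
    obtain ⟨i, hi, hle'⟩ := (heq.and_eventually heventually).exists
    exact le_antisymm (hi ▸ hle') (le_liminf_of_le hbdd hle)

theorem liminf_div_of_frequently_le {ι : Type*} {f : Filter ι} {u : ι → ℕ} {B : ℕ}
    (hB : ∃ᶠ i in f, u i ≤ B) (d : ℕ) : liminf (fun i => u i / d) f = liminf u f / d := by
  obtain ⟨hle, heq⟩ := (liminf_eq_iff_of_frequently_le hB).1 rfl
  have hB' : ∃ᶠ i in f, u i / d ≤ B := hB.mono fun i hi => (Nat.div_le_self _ _).trans hi
  exact (liminf_eq_iff_of_frequently_le hB').2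
    ⟨hle.mono fun i hi => Nat.div_le_div_right hi, heq.mono fun i hi => by rw [hi]⟩

/-! ### States -/

/-- The number with binary digits `b 0, …, b (k - 1)`, most significant digit first, so that the
order of codes is the lexicographic order of words and truncating a word is a division. -/
def prefixCode (b : ℕ → Bool) : ℕ → ℕ
  | 0 => 0
  | k + 1 => Nat.bit (b k) (prefixCode b k)

theorem prefixCode_lt_two_pow (b : ℕ → Bool) (k : ℕ) : prefixCode b k < 2 ^ k := by
  induction k with
  | zero => simp [prefixCode]
  | succ k ih => exact Nat.bit_lt_two_pow_succ_iff.2 ih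

theorem prefixCode_div_two_pow (b : ℕ → Bool) {k K : ℕ} (h : k ≤ K) :
    prefixCode b K / 2 ^ (K - k) = prefixCode b k := by
  obtain ⟨d, rfl⟩ := Nat.exists_eq_add_of_le h
  rw [Nat.add_sub_cancel_left]
  clear h
  induction d with
  | zero => simp
  | succ d ih =>
    rw [pow_succ', ← Nat.div_div_eq_div_mul, ← add_assoc, prefixCode, Nat.bit_div_two, ih]

theorem prefixCode_eq_iff {b b' : ℕ → Bool} {k : ℕ} :
    prefixCode b k = prefixCode b' k ↔ ∀ j < k, b j = b' j := by
  induction k with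
  | zero => simp [prefixCode]
  | succ k ih =>
    rw [Nat.forall_lt_succ_right, ← ih, prefixCode, prefixCode, Nat.bit_val, Nat.bit_val]
    cases b k <;> cases b' k <;> grind

/-- The `k`-state of `y` with respect to the sets `V 0, V 1, …`, given by their characteristic
functions: the code of the word recording which of the first `k` sets contain `y`. -/
def state (V : ℕ → ℕ → Bool) (k y : ℕ) : ℕ := prefixCode (fun j => V j y) k

/-- The lexicographically least `k`-state that infinitely many numbers have. -/
noncomputable def limState (V : ℕ → ℕ → Bool) (k : ℕ) : ℕ := liminf (state V k) atTop

section States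

variable (V : ℕ → ℕ → Bool)

theorem frequently_state_le_two_pow (k : ℕ) : ∃ᶠ y in atTop, state V k y ≤ 2 ^ k :=
  Frequently.of_forall fun _ => (prefixCode_lt_two_pow _ k).le

theorem limState_eq_iff {k σ : ℕ} : limState V k = σ ↔
    (∀ᶠ y in atTop, σ ≤ state V k y) ∧ ∃ᶠ y in atTop, state V k y = σ :=
  liminf_eq_iff_of_frequently_le (frequently_state_le_two_pow V k)

theorem frequently_state_eq_limState (k : ℕ) : ∃ᶠ y in atTop, state V k y = limState V k :=
  ((limState_eq_iff V).1 rfl).2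

theorem state_div_two_pow {k K : ℕ} (h : k ≤ K) (y : ℕ) :
    state V K y / 2 ^ (K - k) = state V k y :=
  prefixCode_div_two_pow _ h

theorem limState_div_two_pow {k K : ℕ} (h : k ≤ K) :
    limState V K / 2 ^ (K - k) = limState V k := by
  rw [limState, ← liminf_div_of_frequently_le (frequently_state_le_two_pow V K)]
  simp only [state_div_two_pow V h, limState]

variable {V}

theorem eventually_state_eq {a : ℕ → ℕ → ℕ → Bool}
    (ha : ∀ j y, ∀ᶠ s in atTop, a s j y = V j y) (k y : ℕ) :
    ∀ᶠ s in atTop, state (a s) k y = state V k y := by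
  simp only [state, prefixCode_eq_iff]
  exact (Set.finite_lt_nat k).eventually_all.2 fun j _ => ha j y

end States

/-! ### Greedy selection -/

/-- Scan `0, 1, 2, …`, selecting `n` when it satisfies the requirement `P e`, where `e` is the
number of elements selected before `n`; this is the number of elements selected below `n`. -/
def greedyCount (P : ℕ → ℕ → Prop) [DecidableRel P] : ℕ → ℕ
  | 0 => 0
  | n + 1 => greedyCount P n + if P (greedyCount P n) n then 1 else 0

/-- The set of numbers selected by the scan of `greedyCount`. -/
def greedySet (P : ℕ → ℕ → Prop) [DecidableRel P] : Set ℕ := {n | P (greedyCount P n) n}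

section Greedy

variable {P Q : ℕ → ℕ → Prop} [DecidableRel P] [DecidableRel Q]

theorem greedyCount_le (n : ℕ) : greedyCount P n ≤ n := by
  induction n with
  | zero => rfl
  | succ n ih => rw [greedyCount]; split <;> omega

theorem mem_greedySet {n : ℕ} : n ∈ greedySet P ↔ P (greedyCount P n) n := Iff.rfl

theorem greedyCount_eq_count [DecidablePred (· ∈ greedySet P)] (n : ℕ) :
    greedyCount P n = Nat.count (· ∈ greedySet P) n := by
  induction n with
  | zero => rfl
  | succ n ih =>
    rw [greedyCount, Nat.count_succ, ← ih]
    simp only [mem_greedySet]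

theorem greedyCount_congr {n : ℕ} (h : ∀ x < n, ∀ e ≤ x, (P e x ↔ Q e x)) :
    greedyCount P n = greedyCount Q n := by
  induction n with
  | zero => rfl
  | succ n ih =>
    have ih := ih fun x hx => h x (hx.trans n.lt_succ_self)
    simp only [greedyCount, ih, h n n.lt_succ_self _ (greedyCount_le n)]

theorem mem_greedySet_congr {n : ℕ} (h : ∀ x ≤ n, ∀ e ≤ x, (P e x ↔ Q e x)) :
    n ∈ greedySet P ↔ n ∈ greedySet Q := by
  have hcount : greedyCount P n = greedyCount Q n := greedyCount_congr fun x hx => h x hx.le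
  rw [mem_greedySet, mem_greedySet, hcount, h n le_rfl _ (greedyCount_le n)]

theorem greedySet_infinite (hP : ∀ e, ∃ᶠ n in atTop, P e n) : (greedySet P).Infinite := by
  intro hfin
  obtain ⟨B, hB⟩ := hfin.bddAbove
  have hconst (n : ℕ) (hn : B + 1 ≤ n) : greedyCount P n = greedyCount P (B + 1) := by
    induction n, hn using Nat.le_induction with
    | base => rfl
    | succ n hn ih =>
      have hnot : ¬ P (greedyCount P n) n := fun h => absurd (hB h) (by omega)
      rw [greedyCount, if_neg hnot, add_zero, ih]
  obtain ⟨n, hPn, hn⟩ :=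
    ((hP (greedyCount P (B + 1))).and_eventually (eventually_ge_atTop (B + 1))).exists
  have hmem : n ∈ greedySet P := by rwa [mem_greedySet, hconst n hn]
  exact absurd (hB hmem) (by omega)

theorem nth_greedySet_spec (hinf : (greedySet P).Infinite) (t : ℕ) :
    P t (Nat.nth (· ∈ greedySet P) t) := by
  classical
  have hmem : Nat.nth (· ∈ greedySet P) t ∈ greedySet P := Nat.nth_mem_of_infinite hinf t
  have hcount : greedyCount P (Nat.nth (· ∈ greedySet P) t) = t := by
    rw [greedyCount_eq_count, Nat.count_nth_of_infinite (p := (· ∈ greedySet P)) hinf]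
  rwa [mem_greedySet, hcount] at hmem

theorem primrecPred_mem_greedySet {α : Type*} [Primcodable α] {P : α → ℕ → ℕ → Prop}
    [∀ c, DecidableRel (P c)] (hP : PrimrecPred fun x : α × ℕ × ℕ => P x.1 x.2.1 x.2.2) :
    PrimrecPred fun x : α × ℕ => x.2 ∈ greedySet (P x.1) := by
  have hstep : Primrec₂ fun (x : α × ℕ) (r : ℕ × ℕ) =>
      r.2 + if P x.1 r.2 r.1 then 1 else 0 :=
    Primrec.nat_add.comp (Primrec.snd.comp .snd)
      (.ite (hP.comp ((Primrec.fst.comp .fst).pair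
        ((Primrec.snd.comp .snd).pair (Primrec.fst.comp .snd)))) (.const 1) (.const 0))
  have hcount : Primrec fun x : α × ℕ => greedyCount (P x.1) x.2 := by
    refine (Primrec.nat_rec' .snd (.const 0) hstep).of_eq fun ⟨c, n⟩ => ?_
    change _ = greedyCount (P c) n
    induction n with
    | zero => rfl
    | succ n ih => simp only [greedyCount, ← ih]
  exact hP.comp (Primrec.fst.pair (hcount.pair .snd))

end Greedy

/-! ### The cohesive set -/

/-- The set whose `e`-th element is the first number beyond its predecessors whose `k e`-state is
the limiting one, for every `e`. -/
noncomputable def cohesiveSet (V : ℕ → ℕ → Bool) (k : ℕ → ℕ) : Set ℕ :=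
  greedySet fun e n => state V (k e) n = limState V (k e)

/-- The requirement that `cohesiveSet` imposes on its `e`-th element, evaluated with an arbitrary
family `W` in place of `V` and with `limState V (k e)` read off a guess `σ` at `limState V K`. -/
def guessedRequirement (W : ℕ → ℕ → Bool) (k : ℕ → ℕ) (K σ e x : ℕ) : Prop :=
  state W (k e) x = σ / 2 ^ (K - k e)

instance (W : ℕ → ℕ → Bool) (k : ℕ → ℕ) (K σ : ℕ) : DecidableRel (guessedRequirement W k K σ) :=
  fun _ _ => inferInstanceAs (Decidable (_ = _))

/-- The evidence offered by `p = (σ, b, s₀)` at `q`, with witness `y`, for `n ∉ cohesiveSet V k`,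
read with `W` in place of `V`: the guess `σ` at `limState V (k n)` is consistent with the states of
`q` and `y`, the bound `b` being the point from which on all states are at least `σ`, the
approximation `a s₀` is correct at `q` if `q ≤ n`, and the scan run with `σ` and `a s₀` omits
`n`. -/
def IsOmissionEvidence (a : ℕ → ℕ → ℕ → Bool) (k : ℕ → ℕ) (W : ℕ → ℕ → Bool) (p : ℕ × ℕ × ℕ)
    (q y n : ℕ) : Prop :=
  (p.2.1 ≤ q → p.1 ≤ state W (k n) q) ∧ (q ≤ y ∧ state W (k n) y = p.1) ∧
    (q ≤ n → state (a p.2.2) (k n) q = state W (k n) q) ∧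
    n ∉ greedySet (guessedRequirement (a p.2.2) k (k n) p.1)

section Cohesive

variable {V W : ℕ → ℕ → Bool} {k : ℕ → ℕ}

theorem cohesiveSet_infinite (V : ℕ → ℕ → Bool) (k : ℕ → ℕ) : (cohesiveSet V k).Infinite :=
  greedySet_infinite fun e => frequently_state_eq_limState V (k e)

theorem state_nth_cohesiveSet (hk : Monotone k) {t u : ℕ} (htu : t ≤ u) :
    state V (k t) (Nat.nth (· ∈ cohesiveSet V k) u) = limState V (k t) := by
  have hu : state V (k u) (Nat.nth (· ∈ cohesiveSet V k) u) = limState V (k u) :=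
    nth_greedySet_spec (cohesiveSet_infinite V k) u
  rw [← state_div_two_pow V (hk htu), hu, limState_div_two_pow V (hk htu)]

theorem nth_cohesiveSet_homogeneous (hk : Monotone k) {t u j : ℕ} (htu : t ≤ u) (hj : j < k t) :
    V j (Nat.nth (· ∈ cohesiveSet V k) u) = V j (Nat.nth (· ∈ cohesiveSet V k) t) :=
  prefixCode_eq_iff.1
    ((state_nth_cohesiveSet hk htu).trans (state_nth_cohesiveSet hk le_rfl).symm) j hj

theorem mem_greedySet_guessedRequirement_iff (hk : Monotone k) {n : ℕ}
    (hW : ∀ x ≤ n, state W (k n) x = state V (k n) x) :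
    n ∈ greedySet (guessedRequirement W k (k n) (limState V (k n))) ↔ n ∈ cohesiveSet V k := by
  refine mem_greedySet_congr fun x hx e he => ?_
  have hen : k e ≤ k n := hk (he.trans hx)
  rw [guessedRequirement, ← state_div_two_pow W hen, hW x hx, state_div_two_pow V hen,
    limState_div_two_pow V hen]

theorem notMem_cohesiveSet_iff {a : ℕ → ℕ → ℕ → Bool}
    (ha : ∀ j y, ∀ᶠ s in atTop, a s j y = V j y) (hk : Monotone k) (n : ℕ) :
    n ∉ cohesiveSet V k ↔ ∃ p, ∀ q, ∃ y, IsOmissionEvidence a k V p q y n := by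
  constructor
  · intro hn
    obtain ⟨hle, heq⟩ := (limState_eq_iff V (k := k n)).1 rfl
    obtain ⟨b, hb⟩ := eventually_atTop.1 hle
    obtain ⟨s₀, hs₀⟩ := ((Set.finite_le_nat n).eventually_all.2
      fun x _ => eventually_state_eq ha (k n) x).exists
    refine ⟨(limState V (k n), b, s₀), fun q => ?_⟩
    obtain ⟨y, hqy, hy⟩ := frequently_atTop.1 heq q
    exact ⟨y, hb q, ⟨hqy, hy⟩, hs₀ q, (mem_greedySet_guessedRequirement_iff hk hs₀).not.2 hn⟩
  · rintro ⟨⟨σ, b, s₀⟩, h⟩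
    choose y hlower hwitness hstage homit using h
    obtain rfl : limState V (k n) = σ := (limState_eq_iff V).2
      ⟨eventually_atTop.2 ⟨b, hlower⟩, frequently_atTop.2 fun q => ⟨y q, hwitness q⟩⟩
    exact (mem_greedySet_guessedRequirement_iff hk hstage).not.1 (homit 0)

theorem eventually_isOmissionEvidence_iff {a : ℕ → ℕ → ℕ → Bool}
    (ha : ∀ j y, ∀ᶠ s in atTop, a s j y = V j y) (p : ℕ × ℕ × ℕ) (q y n : ℕ) :
    (∀ᶠ s in atTop, IsOmissionEvidence a k (a s) p q y n) ↔ IsOmissionEvidence a k V p q y n := by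
  refine Iff.trans (eventually_congr ?_) eventually_const
  filter_upwards [eventually_state_eq ha (k n) q, eventually_state_eq ha (k n) y] with s hq hy
  rw [IsOmissionEvidence, IsOmissionEvidence, hq, hy]

end Cohesive

section CohesivePrimrec

variable {a : ℕ → ℕ → ℕ → Bool} {k : ℕ → ℕ}

theorem primrec_two_pow : Primrec fun n : ℕ => 2 ^ n := by
  refine (Primrec.nat_rec₁ (f := fun _ r => 2 * r) 1
    (Primrec.nat_double.comp .snd)).of_eq fun n => ?_
  induction n with
  | zero => rfl
  | succ n ih => rw [pow_succ', ← ih]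

theorem primrec_state (ha : Primrec fun x : ℕ × ℕ × ℕ => a x.1 x.2.1 x.2.2) :
    Primrec fun x : ℕ × ℕ × ℕ => state (a x.1) x.2.1 x.2.2 := by
  have hbit : Primrec₂ fun (x : ℕ × ℕ × ℕ) (r : ℕ × ℕ) => a x.1 r.1 x.2.2 :=
    ha.comp ((Primrec.fst.comp .fst).pair
      ((Primrec.fst.comp .snd).pair (Primrec.snd.comp (Primrec.snd.comp .fst))))
  have hstep : Primrec₂ fun (x : ℕ × ℕ × ℕ) (r : ℕ × ℕ) => Nat.bit (a x.1 r.1 x.2.2) r.2 :=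
    Primrec.cond hbit (Primrec.nat_double_succ.comp (Primrec.snd.comp .snd))
      (Primrec.nat_double.comp (Primrec.snd.comp .snd))
  refine (Primrec.nat_rec' (Primrec.fst.comp .snd) (.const 0) hstep).of_eq fun ⟨s, k, y⟩ => ?_
  change _ = prefixCode (fun j => a s j y) k
  induction k with
  | zero => rfl
  | succ k ih => rw [prefixCode, ← ih]

theorem primrecPred_guessedRequirement
    (ha : Primrec fun x : ℕ × ℕ × ℕ => a x.1 x.2.1 x.2.2) (hk : Primrec k) :
    PrimrecPred fun x : (ℕ × ℕ × ℕ) × ℕ × ℕ =>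
      guessedRequirement (a x.1.1) k x.1.2.1 x.1.2.2 x.2.1 x.2.2 := by
  have hke : Primrec fun x : (ℕ × ℕ × ℕ) × ℕ × ℕ => k x.2.1 := hk.comp (Primrec.fst.comp .snd)
  have hKσ : Primrec fun x : (ℕ × ℕ × ℕ) × ℕ × ℕ => x.1.2 := Primrec.snd.comp .fst
  exact Primrec.eq.comp
    ((primrec_state ha).comp
      ((Primrec.fst.comp .fst).pair (hke.pair (Primrec.snd.comp .snd))))
    (Primrec.nat_div.comp (Primrec.snd.comp hKσ)
      (primrec_two_pow.comp (Primrec.nat_sub.comp (Primrec.fst.comp hKσ) hke)))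

theorem primrecPred_isOmissionEvidence
    (ha : Primrec fun x : ℕ × ℕ × ℕ => a x.1 x.2.1 x.2.2) (hk : Primrec k) :
    PrimrecPred fun x : (ℕ × ℕ × ℕ) × ℕ × ℕ × ℕ × ℕ =>
      IsOmissionEvidence a k (a x.2.2.2.1) x.1 x.2.1 x.2.2.1 x.2.2.2.2 := by
  have hσ : Primrec fun x : (ℕ × ℕ × ℕ) × ℕ × ℕ × ℕ × ℕ => x.1.1 := .comp .fst .fst
  have hb : Primrec fun x : (ℕ × ℕ × ℕ) × ℕ × ℕ × ℕ × ℕ => x.1.2.1 :=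
    .comp .fst (.comp .snd .fst)
  have hs₀ : Primrec fun x : (ℕ × ℕ × ℕ) × ℕ × ℕ × ℕ × ℕ => x.1.2.2 :=
    .comp .snd (.comp .snd .fst)
  have hq : Primrec fun x : (ℕ × ℕ × ℕ) × ℕ × ℕ × ℕ × ℕ => x.2.1 := .comp .fst .snd
  have hy : Primrec fun x : (ℕ × ℕ × ℕ) × ℕ × ℕ × ℕ × ℕ => x.2.2.1 :=
    .comp .fst (.comp .snd .snd)
  have hs : Primrec fun x : (ℕ × ℕ × ℕ) × ℕ × ℕ × ℕ × ℕ => x.2.2.2.1 :=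
    .comp .fst (.comp .snd (.comp .snd .snd))
  have hn : Primrec fun x : (ℕ × ℕ × ℕ) × ℕ × ℕ × ℕ × ℕ => x.2.2.2.2 :=
    .comp .snd (.comp .snd (.comp .snd .snd))
  have hK := hk.comp hn
  have hstate := primrec_state ha
  have hlower := (Primrec.nat_le.comp hb hq).not.or
    (Primrec.nat_le.comp hσ (hstate.comp (hs.pair (hK.pair hq))))
  have hwitness := (Primrec.nat_le.comp hq hy).and
    (Primrec.eq.comp (hstate.comp (hs.pair (hK.pair hy))) hσ)
  have hstage := (Primrec.nat_le.comp hq hn).not.or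
    (Primrec.eq.comp (hstate.comp (hs₀.pair (hK.pair hq))) (hstate.comp (hs.pair (hK.pair hq))))
  have homit := ((primrecPred_mem_greedySet
    (P := fun c : ℕ × ℕ × ℕ => guessedRequirement (a c.1) k c.2.1 c.2.2)
    (primrecPred_guessedRequirement ha hk)).comp ((hs₀.pair (hK.pair hσ)).pair hn)).not
  refine (hlower.and (hwitness.and (hstage.and homit))).of_eq fun x => ?_
  simp only [IsOmissionEvidence, imp_iff_not_or]

theorem isSigma04_compl_cohesiveSet {V : ℕ → ℕ → Bool}
    (ha : Primrec fun x : ℕ × ℕ × ℕ => a x.1 x.2.1 x.2.2)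
    (hlim : ∀ j y, ∀ᶠ s in atTop, a s j y = V j y) (hk : Primrec k) (hmono : Monotone k) :
    IsSigma04 (cohesiveSet V k)ᶜ := by
  refine isSigma04_of_exists_forall_exists_eventually
    (Q := fun p q y s n => IsOmissionEvidence a k (a s) p q y n)
    (primrecPred_isOmissionEvidence ha hk) fun n => ?_
  simp only [eventually_isOmissionEvidence_iff hlim]
  exact notMem_cohesiveSet_iff hlim hmono n

end CohesivePrimrec

/-! ### The ranges `ran φ_{φ_e(i)}` -/

/-- The family of all sets `ran φ_{φ_e(i)}`, indexed by `Nat.pair e i`; the set is empty where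
`φ_e(i)` is undefined. -/
def iteratedRange (j : ℕ) : Set ℕ := {y | ∃ v ∈ phi j.unpair.1 j.unpair.2, y ∈ (phi v).ran}

/-- The elements of `iteratedRange j` that computations of length `s` on inputs below `s` show. -/
def iteratedRangeStage (s j : ℕ) : Set ℕ :=
  {y | ∃ x < s, (Code.evaln s (Denumerable.ofNat Code j.unpair.1) j.unpair.2).bind
    (fun v => Code.evaln s (Denumerable.ofNat Code v) x) = some y}

theorem iteratedRange_pair {e i v : ℕ} (hv : phi e i = Part.some v) :
    iteratedRange (Nat.pair e i) = (phi v).ran := by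
  simp [iteratedRange, hv]

theorem iteratedRangeStage_subset (s j : ℕ) : iteratedRangeStage s j ⊆ iteratedRange j := by
  rintro y ⟨x, -, hx⟩
  obtain ⟨v, hv, hy⟩ := Option.bind_eq_some_iff.1 hx
  exact ⟨v, Code.evaln_sound hv, x, Code.evaln_sound hy⟩

theorem eventually_mem_iteratedRangeStage {j y : ℕ} (h : y ∈ iteratedRange j) :
    ∀ᶠ s in atTop, y ∈ iteratedRangeStage s j := by
  obtain ⟨v, hv, x, hx⟩ := h
  obtain ⟨s₁, hs₁⟩ := Code.evaln_complete.1 hv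
  obtain ⟨s₂, hs₂⟩ := Code.evaln_complete.1 hx
  filter_upwards [eventually_ge_atTop s₁, eventually_ge_atTop s₂, eventually_gt_atTop x]
    with s h₁ h₂ hxs
  exact ⟨x, hxs, Option.bind_eq_some_iff.2 ⟨v, Code.evaln_mono h₁ hs₁, Code.evaln_mono h₂ hs₂⟩⟩

theorem eventually_mem_iteratedRangeStage_iff (j y : ℕ) :
    ∀ᶠ s in atTop, (y ∈ iteratedRangeStage s j ↔ y ∈ iteratedRange j) := by
  by_cases h : y ∈ iteratedRange j
  · filter_upwards [eventually_mem_iteratedRangeStage h] with s hs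
    exact iff_of_true hs h
  · exact .of_forall fun s => iff_of_false (fun hs => h (iteratedRangeStage_subset s j hs)) h

theorem primrecPred_mem_iteratedRangeStage :
    PrimrecPred fun x : ℕ × ℕ × ℕ => x.2.2 ∈ iteratedRangeStage x.1 x.2.1 := by
  have hindex : Primrec fun z : ℕ × ℕ × ℕ × ℕ => z.2.2.1.unpair :=
    .comp .unpair (.comp .fst (.comp .snd .snd))
  have hs : Primrec fun z : ℕ × ℕ × ℕ × ℕ => z.2.1 := .comp .fst .snd
  have houter : Primrec fun z : ℕ × ℕ × ℕ × ℕ =>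
      Code.evaln z.2.1 (Denumerable.ofNat Code z.2.2.1.unpair.1) z.2.2.1.unpair.2 :=
    Code.primrec_evaln.comp ((hs.pair ((Primrec.ofNat Code).comp (Primrec.fst.comp hindex))).pair
      (Primrec.snd.comp hindex))
  have hinner : Primrec₂ fun (z : ℕ × ℕ × ℕ × ℕ) (v : ℕ) =>
      Code.evaln z.2.1 (Denumerable.ofNat Code v) z.1 :=
    Code.primrec_evaln.comp (((hs.comp .fst).pair ((Primrec.ofNat Code).comp .snd)).pair
      (Primrec.fst.comp .fst))
  have hmatrix : PrimrecRel fun (x : ℕ) (z : ℕ × ℕ × ℕ) =>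
      (Code.evaln z.1 (Denumerable.ofNat Code z.2.1.unpair.1) z.2.1.unpair.2).bind
        (fun v => Code.evaln z.1 (Denumerable.ofNat Code v) x) = some z.2.2 :=
    Primrec.eq.comp (Primrec.option_bind houter hinner)
      (Primrec.option_some.comp (Primrec.snd.comp (Primrec.snd.comp .snd)))
  exact (hmatrix.exists_mem_list.comp (Primrec.list_range.comp .fst) .id).of_eq fun x => by
    simp [iteratedRangeStage]

/-! ### Non-reducibility from cohesiveness -/

theorem classOf_EA_eq_of_mem {A : Set ℕ} {x y : ℕ} (hx : x ∈ A) (hy : y ∈ A) :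
    classOf (EA A) x = classOf (EA A) y := by
  ext z
  change (x = z ∨ x ∈ A ∧ z ∈ A) ↔ (y = z ∨ y ∈ A ∧ z ∈ A)
  grind

theorem image_classOf_EA_subset {A X Y : Set ℕ} (hcompl : ∀ x ∉ A, x ∈ X → x ∈ Y)
    (hA : (X ∩ A).Nonempty → (Y ∩ A).Nonempty) :
    classOf (EA A) '' X ⊆ classOf (EA A) '' Y := by
  rintro _ ⟨x, hx, rfl⟩
  by_cases hxA : x ∈ A
  · obtain ⟨y, hyY, hyA⟩ := hA ⟨x, hx, hxA⟩
    exact ⟨y, hyY, classOf_EA_eq_of_mem hyA hxA⟩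
  · exact ⟨x, hcompl x hxA hx, rfl⟩

theorem image_classOf_EA_eq {A X Y : Set ℕ} (hcompl : ∀ x ∉ A, (x ∈ X ↔ x ∈ Y))
    (hA : (X ∩ A).Nonempty ↔ (Y ∩ A).Nonempty) :
    classOf (EA A) '' X = classOf (EA A) '' Y :=
  (image_classOf_EA_subset (fun x hx => (hcompl x hx).1) hA.1).antisymm
    (image_classOf_EA_subset (fun x hx => (hcompl x hx).2) hA.2)

-- Up to `EA Cᶜ`, a set that is homogeneous from the `a`-th element of `C` on is determined by its
-- trace on the first `a + 1` elements of `C` and by whether it meets `Cᶜ`.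
theorem exists_ne_image_classOf_EA_compl_eq {C : Set ℕ} (hC : C.Infinite) {ι : Type*} [Fintype ι]
    {a : ℕ} (hcard : 2 ^ (a + 2) < Fintype.card ι) {X : ι → Set ℕ}
    (hX : ∀ i, ∀ u ≥ a, (Nat.nth (· ∈ C) u ∈ X i ↔ Nat.nth (· ∈ C) a ∈ X i)) :
    ∃ i i', i ≠ i' ∧ classOf (EA Cᶜ) '' X i = classOf (EA Cᶜ) '' X i' := by
  classical
  let trace (i : ι) : (Fin (a + 1) → Prop) × Prop :=
    (fun t => Nat.nth (· ∈ C) t ∈ X i, (X i ∩ Cᶜ).Nonempty)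
  have htraces : Fintype.card ((Fin (a + 1) → Prop) × Prop) < Fintype.card ι := by
    simpa [pow_succ] using hcard
  obtain ⟨i, i', hne, htrace⟩ := Fintype.exists_ne_map_eq_of_card_lt trace htraces
  obtain ⟨hfirst, hcompl⟩ := Prod.ext_iff.1 htrace
  have hinitial (t : ℕ) (ht : t ≤ a) : Nat.nth (· ∈ C) t ∈ X i ↔ Nat.nth (· ∈ C) t ∈ X i' :=
    (congrFun hfirst ⟨t, Nat.lt_succ_of_le ht⟩).to_iff
  refine ⟨i, i', hne, image_classOf_EA_eq (fun x hx => ?_) hcompl.to_iff⟩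
  obtain ⟨u, rfl⟩ : x ∈ Set.range (Nat.nth (· ∈ C)) :=
    (Nat.range_nth_of_infinite hC).symm ▸ not_not.1 hx
  rcases le_total u a with hu | hu
  · exact hinitial u hu
  · rw [hX i u hu, hX i' u hu, hinitial a le_rfl]

theorem exists_phi_eq_of_computable {f : ℕ → ℕ} (hf : Computable f) :
    ∃ e, ∀ i, phi e i = Part.some (f i) := by
  obtain ⟨c, hc⟩ := Code.exists_code.1 (Partrec.nat_iff.1 hf.partrec)
  exact ⟨Encodable.encode c, fun i => by rw [phi, Denumerable.ofNat_encode, hc]; rfl⟩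

theorem not_reduces_eq_fsJump_EA_compl {C : Set ℕ} (hC : C.Infinite)
    (hhom : ∀ e, ∀ i ≤ 2 ^ (e + 2), ∀ u ≥ e,
      (Nat.nth (· ∈ C) u ∈ iteratedRange (Nat.pair e i) ↔
        Nat.nth (· ∈ C) e ∈ iteratedRange (Nat.pair e i))) :
    ¬ Reduces (@Eq ℕ) (FSJump (EA Cᶜ)) := by
  rintro ⟨f, hf, hred⟩
  obtain ⟨e, he⟩ := exists_phi_eq_of_computable hf
  obtain ⟨i, i', hne, hclasses⟩ :=
    exists_ne_image_classOf_EA_compl_eq (ι := Fin (2 ^ (e + 2) + 1)) (a := e)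
      (X := fun i => (phi (f i)).ran) hC (by simp) fun i => by
        rw [← iteratedRange_pair (he i)]
        exact hhom e i (Nat.le_of_lt_succ i.isLt)
  exact hne (Fin.ext ((hred i i').2 hclasses))

/-! ### The homogeneity bound -/

/-- The number of sets that the `e`-th element of the cohesive set must treat alike: it exceeds the
index `Nat.pair e i` of `ran φ_{φ_e(i)}` for `2 ^ (e + 2) + 1` values of `i`, one more than
there are traces. -/
def homogeneityBound (e : ℕ) : ℕ := Nat.pair e (2 ^ (e + 2) + 1)

theorem homogeneityBound_monotone : Monotone homogeneityBound := by
  have hleft (i : ℕ) : StrictMono (Nat.pair · i) := fun _ _ h => Nat.pair_lt_pair_left i h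
  have hright (e : ℕ) : StrictMono (Nat.pair e) := fun _ _ h => Nat.pair_lt_pair_right e h
  intro e e' h
  calc Nat.pair e (2 ^ (e + 2) + 1) ≤ Nat.pair e' (2 ^ (e + 2) + 1) := (hleft _).monotone h
    _ ≤ Nat.pair e' (2 ^ (e' + 2) + 1) := (hright e').monotone (by gcongr; norm_num)

theorem primrec_homogeneityBound : Primrec homogeneityBound :=
  Primrec₂.natPair.comp .id (Primrec.succ.comp
    (primrec_two_pow.comp (Primrec.nat_add.comp .id (.const 2))))

end CohesiveJump

open CohesiveJump

/-- There is a coinfinite `Σ⁰₄` set `A` with `id` not computably reducible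
to `(E_A)⁺`. -/
theorem exists_sigma04_id_not_reducible_jump :
    ∃ A : Set ℕ, Aᶜ.Infinite ∧
      (∃ R : ℕ × ℕ × ℕ × ℕ × ℕ → Bool, Computable R ∧
        ∀ n, n ∈ A ↔ ∃ p, ∀ q, ∃ m, ∀ s, R (p, q, m, s, n) = true) ∧
      ¬ Reduces (@Eq ℕ) (FSJump (EA A)) := by
  classical
  let V (j y : ℕ) : Bool := decide (y ∈ iteratedRange j)
  have hlim (j y : ℕ) : ∀ᶠ s in atTop, decide (y ∈ iteratedRangeStage s j) = V j y :=
    (eventually_mem_iteratedRangeStage_iff j y).mono fun _ => decide_eq_decide.2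
  have hinf := cohesiveSet_infinite V homogeneityBound
  refine ⟨(cohesiveSet V homogeneityBound)ᶜ, by rwa [compl_compl],
    isSigma04_compl_cohesiveSet primrecPred_mem_iteratedRangeStage.decide hlim
      primrec_homogeneityBound homogeneityBound_monotone,
    not_reduces_eq_fsJump_EA_compl hinf fun e i hi u hu => ?_⟩
  have hpair : Nat.pair e i < homogeneityBound e :=
    Nat.pair_lt_pair_right e (Nat.lt_succ_of_le hi)
  simpa [V] using nth_cohesiveSet_homogeneous (V := V) homogeneityBound_monotone hu hpair
end

section
/- For a total computable function f : ℕ → ℕ, the following three properties are equivalent: (1) f is =^{ce}-invariant, i.e., W_e = W_{e'} implies W_{f(e)} = W_{f(e')}; (2) f is monotone, i.e., W_{e'} ⊆ W_e implies W_{f(e')} ⊆ W_{f(e)}; (3) f is inner-regular, i.e., for every e, W_{f(e)} = ⋃{W_{f(e')} : W_{e'} ⊆ W_e and W_{e'} is finite}. -/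
/-! As `f` is computable, each set `{e | x ∈ W_{f(e)}}` is c.e. If `f` is invariant, these are c.e.
index sets, and inner regularity is the Rice–Shapiro theorem for each of them: a c.e. index set `p`
contains `e` iff it contains an index of some finite subset of `W_e`. Both directions use the
recursion theorem to build an index `c` that waits for `c` itself to enter `p`.

* If `W_d ⊆ W_e` and `p d`, let `W_c` be `W_d` until `c` enters `p`, and `W_e` from then on.
  Were `c` never to enter `p`, we would have `W_c = W_d`; so it does, and `W_c = W_e`.
* If `p e`, let `W_c` contain those `n ∈ W_e` for which `c` has not entered `p` by stage `n`.
  Were `c` never to enter `p`, we would have `W_c = W_e`; so it does, and `W_c` is finite. -/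

section REPred

variable {α β : Type*} [Primcodable α] [Primcodable β] {p q : α → Prop}

theorem rePred_comp (hp : REPred p) {g : β → α} (hg : Computable g) : REPred fun b => p (g b) :=
  Partrec.comp hp hg

theorem rePred_and (hp : REPred p) (hq : REPred q) : REPred fun a => p a ∧ q a :=
  (Partrec.bind hp (rePred_comp hq Computable.fst).to₂).dom_re.of_eq fun a => by simp [Part.assert]

theorem rePred_or (hp : REPred p) (hq : REPred q) : REPred fun a => p a ∨ q a := by
  obtain ⟨k, hk, hk_spec⟩ := Partrec.merge' hp hq
  exact hk.dom_re.of_eq fun a => by simp [(hk_spec a).2, Part.assert]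

theorem exists_code_dom_iff_of_rePred (hp : REPred p) :
    ∃ c : Nat.Partrec.Code, ∀ a, p a ↔ (c.eval (Encodable.encode a)).Dom := by
  obtain ⟨c, hc⟩ := Nat.Partrec.Code.exists_code.1 hp
  exact ⟨c, fun a => by simp [hc, Part.assert]⟩

theorem exists_monotone_computablePred_of_rePred (hp : REPred p) :
    ∃ stage : ℕ → α → Prop, Monotone stage ∧
      ComputablePred (fun x : ℕ × α => stage x.1 x.2) ∧ ∀ a, p a ↔ ∃ s, stage s a := by
  obtain ⟨c, hc⟩ := exists_code_dom_iff_of_rePred hp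
  refine ⟨fun s a => (c.evaln s (Encodable.encode a)).isSome, ?_, ?_, fun a => ?_⟩
  · intro s t hst a hs
    obtain ⟨y, hy⟩ := Option.isSome_iff_exists.1 hs
    exact Option.isSome_iff_exists.2 ⟨y, Nat.Partrec.Code.evaln_mono hst hy⟩
  · have h_evaln : Computable fun x : ℕ × α => c.evaln x.1 (Encodable.encode x.2) :=
      Nat.Partrec.Code.primrec_evaln.to_comp.comp
        ((Computable.fst.pair (Computable.const c)).pair (Computable.encode.comp Computable.snd))
    exact ComputablePred.computable_iff.2
      ⟨_, Primrec.option_isSome.to_comp.comp h_evaln, rfl⟩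
  · simp only [hc, Part.dom_iff_mem, Nat.Partrec.Code.evaln_complete, Option.isSome_iff_exists,
      Option.mem_def]
    exact exists_comm

end REPred

theorem rePred_mem_WSet : REPred fun x : ℕ × ℕ => x.2 ∈ WSet x.1 :=
  (Nat.Partrec.Code.eval_part.comp
    ((Computable.ofNat Nat.Partrec.Code).comp Computable.fst) Computable.snd).dom_re

theorem exists_WSet_eq_setOf_self {R : ℕ → ℕ → Prop} (hR : REPred fun x : ℕ × ℕ => R x.1 x.2) :
    ∃ c, WSet c = {n | R c n} := by
  have h_code : REPred fun x : Nat.Partrec.Code × ℕ => R (Encodable.encode x.1) x.2 :=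
    rePred_comp hR ((Computable.encode.comp Computable.fst).pair Computable.snd)
  obtain ⟨c, hc⟩ := Nat.Partrec.Code.fixed_point₂ (h_code.map (Computable.const 0).to₂).to₂
  refine ⟨Encodable.encode c, Set.ext fun n => ?_⟩
  change (phi (Encodable.encode c) n).Dom ↔ R (Encodable.encode c) n
  simp [phi, hc, Part.assert]

section RiceShapiro

variable {p : ℕ → Prop}

theorem rice_shapiro_of_subset (hp : REPred p) (hp_inv : p.FactorsThrough WSet) {d e : ℕ}
    (hde : WSet d ⊆ WSet e) (hd : p d) : p e := by
  obtain ⟨c, hc⟩ : ∃ c, WSet c = {n | n ∈ WSet d ∨ p c ∧ n ∈ WSet e} :=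
    exists_WSet_eq_setOf_self <|
      rePred_or (rePred_comp rePred_mem_WSet ((Computable.const d).pair Computable.snd))
        (rePred_and (rePred_comp hp Computable.fst)
          (rePred_comp rePred_mem_WSet ((Computable.const e).pair Computable.snd)))
  have hpc : p c := by
    by_contra hpc
    have hcd : WSet c = WSet d := by simp [hc, hpc]
    exact hpc ((hp_inv hcd).mpr hd)
  have hce : WSet c = WSet e := by
    ext n
    simpa [hc, hpc] using @hde n
  exact (hp_inv hce).mp hpc

theorem rice_shapiro_exists_finite_subset (hp : REPred p) (hp_inv : p.FactorsThrough WSet)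
    {e : ℕ} (he : p e) :
    ∃ e', WSet e' ⊆ WSet e ∧ (WSet e').Finite ∧ p e' := by
  obtain ⟨stage, h_mono, h_comp, h_stage⟩ := exists_monotone_computablePred_of_rePred hp
  obtain ⟨c, hc⟩ : ∃ c, WSet c = {n | n ∈ WSet e ∧ ¬ stage n c} :=
    exists_WSet_eq_setOf_self <|
      rePred_and (rePred_comp rePred_mem_WSet ((Computable.const e).pair Computable.snd))
        (rePred_comp h_comp.not.to_re (Computable.snd.pair Computable.fst))
  have hpc : p c := by
    by_contra hpc
    have h_never : ∀ s, ¬ stage s c := by simpa [h_stage] using hpc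
    have hce : WSet c = WSet e := by simp [hc, h_never]
    exact hpc ((hp_inv hce).mpr he)
  obtain ⟨s, hs⟩ := (h_stage c).1 hpc
  have h_bound : WSet c ⊆ Set.Iio s := fun n hn =>
    not_le.1 fun hsn => (hc.subset hn).2 (h_mono hsn c hs)
  exact ⟨c, fun n hn => (hc.subset hn).1, (Set.finite_Iio s).subset h_bound, hpc⟩

theorem rice_shapiro (hp : REPred p) (hp_inv : p.FactorsThrough WSet) (e : ℕ) :
    p e ↔ ∃ e', WSet e' ⊆ WSet e ∧ (WSet e').Finite ∧ p e' :=
  ⟨rice_shapiro_exists_finite_subset hp hp_inv,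
    fun ⟨_, h_sub, _, h⟩ => rice_shapiro_of_subset hp hp_inv h_sub h⟩

end RiceShapiro

theorem invariant_iff_monotone_iff_innerRegular_general {α : Type*} (F : ℕ → Set α)
    (hF : ∀ x, REPred fun e => x ∈ F e) :
    List.TFAE
      [ ∀ e e', WSet e = WSet e' → F e = F e',
        ∀ e e', WSet e' ⊆ WSet e → F e' ⊆ F e,
        ∀ e, F e = {x | ∃ e', WSet e' ⊆ WSet e ∧ (WSet e').Finite ∧ x ∈ F e'} ] := by
  tfae_have 1 → 3 := fun h_inv e => Set.ext fun x =>
    rice_shapiro (hF x) (fun d d' hd => congrArg (x ∈ ·) (h_inv d d' hd)) e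
  tfae_have 3 → 2 := by
    intro h_reg e e' h_sub
    rw [h_reg e, h_reg e']
    exact fun x ⟨d, hd, h_fin, hx⟩ => ⟨d, hd.trans h_sub, h_fin, hx⟩
  tfae_have 2 → 1 := fun h_mono e e' h => (h_mono e' e h.le).antisymm (h_mono e e' h.ge)
  tfae_finish

/-- For a computable `f`, being `=^{ce}`-invariant, monotone, and inner-regular
are equivalent. -/
theorem invariant_iff_monotone_iff_innerRegular (f : ℕ → ℕ) (hf : Computable f) :
    List.TFAE
      [ ∀ e e', WSet e = WSet e' → WSet (f e) = WSet (f e'),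
        ∀ e e', WSet e' ⊆ WSet e → WSet (f e') ⊆ WSet (f e),
        ∀ e, WSet (f e) =
          {x | ∃ e', WSet e' ⊆ WSet e ∧ (WSet e').Finite ∧ x ∈ WSet (f e')} ] :=
  invariant_iff_monotone_iff_innerRegular_general (fun e => WSet (f e)) fun x =>
    rePred_comp rePred_mem_WSet (hf.pair (Computable.const x))
end
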